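/- Selberg's integral for n = 2, z = 1/2: for real x, y > 0, ∫_0^1 ∫_0^1 t_1^{x-1} t_2^{x-1} (1-t_1)^{y-1} (1-t_2)^{y-1} |t_1 - t_2| dt_1 dt_2 = [Γ(x)Γ(y)Γ(3/2)/(Γ(x+y+1/2)Γ(3/2)) ] · [Γ(x+1/2)Γ(y+1/2)Γ(2)/(Γ(x+y+1)Γ(3/2))], i.e. equals Γ(x)Γ(y)Γ(x+1/2)Γ(y+1/2) / ( Γ(x+y+1/2) Γ(x+y+1) Γ(3/2) ). -/

import Mathlib

open Real

open MeasureTheory Set in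
/-- The real beta integral over the open unit interval. -/
theorem sel_beta (a b : ℝ) (ha : 0 < a) (hb : 0 < b) :
    IntegrableOn (fun t : ℝ => t ^ (a - 1) * (1 - t) ^ (b - 1)) (Ioo 0 1) ∧
    ∫ t in Ioo (0 : ℝ) 1, t ^ (a - 1) * (1 - t) ^ (b - 1)
      = Gamma a * Gamma b / Gamma (a + b) := by
  have hc := Complex.betaIntegral_convergent (u := a) (v := b) (by simpa) (by simpa)
  rw [intervalIntegrable_iff_integrableOn_Ioo_of_le (by simp)] at hc
  have hcongr : ∀ t ∈ Ioo (0 : ℝ) 1,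
      RCLike.re ((t : ℂ) ^ ((a : ℂ) - 1) * (1 - (t : ℂ)) ^ ((b : ℂ) - 1))
        = t ^ (a - 1) * (1 - t) ^ (b - 1) := by
    rintro t ⟨h1, h2⟩
    norm_cast
    rw [← Complex.ofReal_cpow, ← Complex.ofReal_cpow, RCLike.re_to_complex,
        Complex.re_mul_ofReal, Complex.ofReal_re]
    all_goals linarith
  constructor
  · exact IntegrableOn.congr_fun hc.re hcongr measurableSet_Ioo
  · have h := ProbabilityTheory.beta_eq_betaIntegralReal a b ha hb
    rw [ProbabilityTheory.beta] at h
    rw [h, Complex.betaIntegral, intervalIntegral.integral_of_le (by norm_num),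
      integral_Ioc_eq_integral_Ioo, ← RCLike.re_to_complex, ← integral_re hc]
    exact (setIntegral_congr_fun measurableSet_Ioo hcongr).symm

/-- The open triangle `0 < s < t < 1`. -/
def selU : Set (ℝ × ℝ) := {z | 0 < z.2 ∧ z.2 < z.1 ∧ z.1 < 1}

/-- The image region. -/
def selV : Set (ℝ × ℝ) := {z | 0 < z.1 ∧ z.1 < 1 ∧ 0 < z.2 ∧ z.2 < (1 - √z.1) ^ 2}

/-- The change of variables. -/
def selF (z : ℝ × ℝ) : ℝ × ℝ := (z.1 * z.2, (1 - z.1) * (1 - z.2))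

theorem selU_meas : MeasurableSet selU := by
  have h1 : IsOpen {z : ℝ × ℝ | 0 < z.2} := isOpen_lt (by fun_prop) (by fun_prop)
  have h2 : IsOpen {z : ℝ × ℝ | z.2 < z.1} := isOpen_lt (by fun_prop) (by fun_prop)
  have h3 : IsOpen {z : ℝ × ℝ | z.1 < 1} := isOpen_lt (by fun_prop) (by fun_prop)
  exact (h1.inter (h2.inter h3)).measurableSet

theorem selV_meas : MeasurableSet selV := by
  have h1 : IsOpen {z : ℝ × ℝ | 0 < z.1} := isOpen_lt (by fun_prop) (by fun_prop)
  have h2 : IsOpen {z : ℝ × ℝ | z.1 < 1} := isOpen_lt (by fun_prop) (by fun_prop)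
  have h3 : IsOpen {z : ℝ × ℝ | 0 < z.2} := isOpen_lt (by fun_prop) (by fun_prop)
  have h4 : IsOpen {z : ℝ × ℝ | z.2 < (1 - √z.1) ^ 2} := isOpen_lt (by fun_prop) (by fun_prop)
  exact (h1.inter (h2.inter (h3.inter h4))).measurableSet

theorem selF_inj : Set.InjOn selF selU := by
  rintro ⟨t, s⟩ ⟨h1, h2, h3⟩ ⟨t', s'⟩ ⟨h1', h2', h3'⟩ h
  simp only [selF, Prod.mk.injEq] at h h1 h2 h3 h1' h2' h3'
  obtain ⟨ha, hb⟩ := h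
  have hsum : t + s = t' + s' := by linarith
  have hd : (t - s) ^ 2 = (t' - s') ^ 2 := by
    have : (t + s) ^ 2 = (t' + s') ^ 2 := by rw [hsum]
    linarith
  have hd' : t - s = t' - s' := by
    rwa [sq_eq_sq₀ (by linarith) (by linarith)] at hd
  ext <;> simp <;> linarith

theorem selF_image : selF '' selU = selV := by
  ext ⟨p, q⟩
  constructor
  · rintro ⟨⟨t, s⟩, ⟨h1, h2, h3⟩, h⟩
    simp only [selF, Prod.mk.injEq] at h h1 h2 h3
    obtain ⟨rfl, rfl⟩ := h
    have ht : 0 < t := by linarith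
    refine ⟨mul_pos ht h1, by simp only; nlinarith, mul_pos (by linarith) (by linarith), ?_⟩
    simp only
    have e1 : √(t * s) ^ 2 = t * s := Real.sq_sqrt (by positivity)
    have e2 : √(t * s) < (t + s) / 2 := by
      rw [Real.sqrt_lt' (by positivity)]
      nlinarith [mul_pos (sub_pos.2 h2) (sub_pos.2 h2)]
    nlinarith
  · rintro ⟨h1, h2, h3, h4⟩
    simp only at h1 h2 h3 h4
    have e1 : √p ^ 2 = p := Real.sq_sqrt h1.le
    have hp0 : 0 < √p := Real.sqrt_pos.2 h1
    have e2 : 2 * √p < 1 + p - q := by nlinarith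
    have hd : 0 < (1 + p - q) ^ 2 - 4 * p := by nlinarith
    have hD : √((1 + p - q) ^ 2 - 4 * p) ^ 2 = (1 + p - q) ^ 2 - 4 * p := Real.sq_sqrt hd.le
    have hD0 := Real.sqrt_pos.2 hd
    have b1 : √((1 + p - q) ^ 2 - 4 * p) < 1 + p - q := by
      rw [Real.sqrt_lt' (by linarith)]; linarith
    have b2 : √((1 + p - q) ^ 2 - 4 * p) < 1 - p + q := by
      rw [Real.sqrt_lt' (by linarith)]; nlinarith
    generalize √((1 + p - q) ^ 2 - 4 * p) = D at *
    refine ⟨((1 + p - q + D) / 2, (1 + p - q - D) / 2), ⟨?_, ?_, ?_⟩, ?_⟩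
    · simp only; linarith
    · simp only; linarith
    · simp only; linarith
    · simp only [selF, Prod.mk.injEq]
      constructor <;> nlinarith

/-- The derivative of the change of variables. -/
noncomputable def selF' (z : ℝ × ℝ) : ℝ × ℝ →L[ℝ] ℝ × ℝ :=
  (Matrix.toLin (.finTwoProd ℝ) (.finTwoProd ℝ)
    !![z.2, z.1; -(1 - z.2), -(1 - z.1)]).toContinuousLinearMap

theorem selF_deriv (z : ℝ × ℝ) : HasFDerivAt selF (selF' z) z := by
  unfold selF'
  rw [Matrix.toLin_finTwoProd_toContinuousLinearMap]
  have h := HasFDerivAt.prodMk (𝕜 := ℝ)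
      ((hasFDerivAt_fst (𝕜 := ℝ) (p := z)).mul (hasFDerivAt_snd (𝕜 := ℝ) (p := z)))
      (((hasFDerivAt_fst (𝕜 := ℝ) (p := z)).const_sub 1).mul
        ((hasFDerivAt_snd (𝕜 := ℝ) (p := z)).const_sub 1))
  refine HasFDerivAt.congr_fderiv h ?_
  ext <;> simp

theorem selF_det (z : ℝ × ℝ) : (selF' z).det = z.1 - z.2 := by
  unfold selF'
  simp only [LinearMap.det_toContinuousLinearMap, LinearMap.det_toLin,
    Matrix.det_fin_two_of]
  ring

open MeasureTheory Set in
theorem sel_int (x y : ℝ) (hx : 0 < x) (hy : 0 < y) (φ : ℝ × ℝ → ℝ) (hφ : Continuous φ)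
    (hb : ∀ z ∈ Ioo (0 : ℝ) 1 ×ˢ Ioo (0 : ℝ) 1, |φ z| ≤ 1) :
    IntegrableOn (fun z : ℝ × ℝ => ((z.1 ^ (x - 1) * (1 - z.1) ^ (y - 1)) *
      (z.2 ^ (x - 1) * (1 - z.2) ^ (y - 1))) * φ z) (Ioo 0 1 ×ˢ Ioo 0 1) := by
  have h := (sel_beta x y hx hy).1
  have h2 := Integrable.mul_prod h h
  rw [Measure.prod_restrict] at h2
  refine Integrable.mul_bdd (c := 1) h2 hφ.aestronglyMeasurable ?_
  exact ae_restrict_of_forall_mem (measurableSet_Ioo.prod measurableSet_Ioo) hb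

open MeasureTheory Set in
/-- Integral over the image region. -/
theorem sel_V (x y : ℝ) (hx : 0 < x) (hy : 0 < y)
    (hi : IntegrableOn (fun z : ℝ × ℝ => z.1 ^ (x - 1) * z.2 ^ (y - 1)) selV) :
    ∫ z in selV, z.1 ^ (x - 1) * z.2 ^ (y - 1)
      = 2 / y * (Gamma (2 * x) * Gamma (2 * y + 1) / Gamma (2 * x + (2 * y + 1))) := by
  have hsub : selV ⊆ Ioo (0 : ℝ) 1 ×ˢ (univ : Set ℝ) := by
    rintro ⟨p, q⟩ ⟨h1, h2, h3, h4⟩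
    exact ⟨⟨h1, h2⟩, mem_univ _⟩
  have hI := hi.integrable_indicator selV_meas
  have e1 : ∫ z in selV, z.1 ^ (x - 1) * z.2 ^ (y - 1)
      = ∫ p in Ioo (0 : ℝ) 1, ∫ q in (univ : Set ℝ),
        selV.indicator (fun z : ℝ × ℝ => z.1 ^ (x - 1) * z.2 ^ (y - 1)) (p, q) := by
    rw [← setIntegral_prod _ hI.integrableOn]
    rw [← Measure.volume_eq_prod, setIntegral_indicator selV_meas,
      inter_eq_self_of_subset_right hsub]
  have e2 : ∀ p ∈ Ioo (0 : ℝ) 1, ∫ q in (univ : Set ℝ),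
        selV.indicator (fun z : ℝ × ℝ => z.1 ^ (x - 1) * z.2 ^ (y - 1)) (p, q)
        = p ^ (x - 1) * ((1 - √p) ^ (2 * y) / y) := by
    rintro p ⟨hp0, hp1⟩
    have hs : √p < 1 := by rw [Real.sqrt_lt' one_pos]; simpa
    have : ∀ q, selV.indicator (fun z : ℝ × ℝ => z.1 ^ (x - 1) * z.2 ^ (y - 1)) (p, q)
        = (Ioo 0 ((1 - √p) ^ 2)).indicator (fun q => p ^ (x - 1) * q ^ (y - 1)) q := by
      intro q
      by_cases hq : q ∈ Ioo 0 ((1 - √p) ^ 2)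
      · rw [indicator_of_mem hq, indicator_of_mem]
        exact ⟨hp0, hp1, hq.1, hq.2⟩
      · rw [indicator_of_notMem hq, indicator_of_notMem]
        exact fun h => hq ⟨h.2.2.1, h.2.2.2⟩
    simp_rw [this]
    rw [setIntegral_univ, integral_indicator measurableSet_Ioo, integral_const_mul,
      ← integral_Ioc_eq_integral_Ioo, ← intervalIntegral.integral_of_le (by positivity),
      integral_rpow (Or.inl (by linarith))]
    congr 1
    rw [← Real.rpow_natCast, ← Real.rpow_mul (by linarith)]
    simp [hy.ne']
  have e3 : Ioo (0 : ℝ) 1 = (fun a : ℝ => a ^ 2) '' Ioo 0 1 := by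
    ext p
    constructor
    · rintro ⟨h0, h1⟩
      exact ⟨√p, ⟨Real.sqrt_pos.2 h0, by rw [Real.sqrt_lt' one_pos]; simpa⟩, Real.sq_sqrt h0.le⟩
    · rintro ⟨a, ⟨h0, h1⟩, rfl⟩
      exact ⟨by positivity, by simp only; nlinarith⟩
  rw [e1, setIntegral_congr_fun measurableSet_Ioo e2, e3,
    integral_image_eq_integral_abs_deriv_smul (f' := fun a => 2 * a) measurableSet_Ioo]
  · rw [← (sel_beta (2 * x) (2 * y + 1) (by linarith) (by linarith)).2, ← integral_const_mul]
    refine setIntegral_congr_fun measurableSet_Ioo ?_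
    rintro a ⟨h0, h1⟩
    simp only [smul_eq_mul]
    rw [abs_of_pos (by linarith), Real.sqrt_sq h0.le, ← Real.rpow_natCast a 2,
      ← Real.rpow_mul h0.le, add_sub_cancel_right]
    have : a ^ (2 * x - 1) = a ^ (((2 : ℕ) : ℝ) * (x - 1)) * a := by
      rw [← Real.rpow_add_one h0.ne']
      congr 1; push_cast; ring
    rw [this]
    field_simp
  · intro a _
    simpa using (hasDerivAt_pow 2 a).hasDerivWithinAt
  · rintro a ⟨h0, _⟩ b ⟨h0', _⟩ h
    exact (sq_eq_sq₀ h0.le h0'.le).1 h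

open MeasureTheory Set in
/-- Integral over the triangle. -/
theorem sel_U (x y : ℝ) (hx : 0 < x) (hy : 0 < y) :
    ∫ z in Ioo (0 : ℝ) 1 ×ˢ Ioo (0 : ℝ) 1, ((z.1 ^ (x - 1) * (1 - z.1) ^ (y - 1)) *
      (z.2 ^ (x - 1) * (1 - z.2) ^ (y - 1))) * max (z.1 - z.2) 0
      = 2 / y * (Gamma (2 * x) * Gamma (2 * y + 1) / Gamma (2 * x + (2 * y + 1))) := by
  have hsub : selU ⊆ Ioo (0 : ℝ) 1 ×ˢ Ioo (0 : ℝ) 1 := by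
    rintro ⟨t, s⟩ ⟨h1, h2, h3⟩
    simp only at h1 h2 h3
    exact ⟨⟨by simp only; linarith, h3⟩, ⟨h1, by simp only; linarith⟩⟩
  have hint := sel_int x y hx hy (fun z => max (z.1 - z.2) 0) (by fun_prop) (by
    rintro ⟨t, s⟩ ⟨⟨h1, h2⟩, ⟨h3, h4⟩⟩
    simp only at h1 h2 h3 h4 ⊢
    rw [abs_of_nonneg (le_max_right _ _)]
    exact max_le (by linarith) zero_le_one)
  have hcongr : ∀ z ∈ selU, ((z.1 ^ (x - 1) * (1 - z.1) ^ (y - 1)) *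
      (z.2 ^ (x - 1) * (1 - z.2) ^ (y - 1))) * max (z.1 - z.2) 0
      = |(selF' z).det| • ((selF z).1 ^ (x - 1) * (selF z).2 ^ (y - 1)) := by
    rintro ⟨t, s⟩ ⟨h1, h2, h3⟩
    simp only at h1 h2 h3
    rw [selF_det]
    simp only [selF, smul_eq_mul]
    rw [max_eq_left (by linarith), abs_of_pos (by linarith),
      Real.mul_rpow (by linarith) (by linarith), Real.mul_rpow (by linarith) (by linarith)]
    ring
  have hd : ∀ z ∈ selU, HasFDerivWithinAt selF (selF' z) selU z :=
    fun z _ => (selF_deriv z).hasFDerivWithinAt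
  have hV := (integrableOn_image_iff_integrableOn_abs_det_fderiv_smul volume selU_meas hd selF_inj
    (fun z : ℝ × ℝ => z.1 ^ (x - 1) * z.2 ^ (y - 1))).2
      ((hint.mono_set hsub).congr_fun hcongr selU_meas)
  rw [selF_image] at hV
  rw [← sel_V x y hx hy hV, ← selF_image,
    integral_image_eq_integral_abs_det_fderiv_smul volume selU_meas hd selF_inj,
    ← setIntegral_congr_fun selU_meas hcongr]
  refine (setIntegral_eq_of_subset_of_forall_sdiff_eq_zero
    (measurableSet_Ioo.prod measurableSet_Ioo) hsub ?_)
  rintro ⟨t, s⟩ ⟨⟨⟨h1, h2⟩, ⟨h3, h4⟩⟩, h5⟩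
  simp only at h1 h2 h3 h4 ⊢
  rw [max_eq_right, mul_zero]
  by_contra hh
  exact h5 ⟨h3, by simp only; linarith, h2⟩

theorem sel_gamma (x y : ℝ) (hx : 0 < x) (hy : 0 < y) :
    2 * (2 / y * (Gamma (2 * x) * Gamma (2 * y + 1) / Gamma (2 * x + (2 * y + 1))))
      = Gamma x * Gamma y * Gamma (x + 1 / 2) * Gamma (y + 1 / 2) /
          (Gamma (x + y + 1 / 2) * Gamma (x + y + 1) * Gamma (3 / 2)) := by
  have d1 := Real.Gamma_mul_Gamma_add_half x
  have d2 := Real.Gamma_mul_Gamma_add_half y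
  have d3 := Real.Gamma_mul_Gamma_add_half (x + y + 1 / 2)
  have g : Gamma (3 / 2) = 1 / 2 * √π := by
    rw [show (3 / 2 : ℝ) = 1 / 2 + 1 by norm_num, Real.Gamma_add_one (by norm_num),
      Real.Gamma_one_half_eq]
  have g2 : Gamma (2 * y + 1) = 2 * y * Gamma (2 * y) := Real.Gamma_add_one (by positivity)
  rw [show x + y + 1 / 2 + 1 / 2 = x + y + 1 by ring,
    show 2 * (x + y + 1 / 2) = 2 * x + (2 * y + 1) by ring] at d3
  have p : (2 : ℝ) ^ (1 - 2 * x) * 2 ^ (1 - 2 * y) = 4 * 2 ^ (1 - (2 * x + (2 * y + 1))) := by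
    rw [← Real.rpow_add two_pos, show (4 : ℝ) = 2 ^ (2 : ℝ) by norm_num, ← Real.rpow_add two_pos]
    congr 1; ring
  have hG : Gamma (2 * x + (2 * y + 1)) ≠ 0 := (Real.Gamma_pos_of_pos (by positivity)).ne'
  have hpi : √π ≠ 0 := (Real.sqrt_pos.2 Real.pi_pos).ne'
  have h2 : (2 : ℝ) ^ (1 - (2 * x + (2 * y + 1))) ≠ 0 := (Real.rpow_pos_of_pos two_pos _).ne'
  rw [d3, g, g2, show Gamma x * Gamma y * Gamma (x + 1 / 2) * Gamma (y + 1 / 2)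
    = (Gamma x * Gamma (x + 1 / 2)) * (Gamma y * Gamma (y + 1 / 2)) by ring, d1, d2,
    show Gamma (2 * x) * 2 ^ (1 - 2 * x) * √π * (Gamma (2 * y) * 2 ^ (1 - 2 * y) * √π)
    = Gamma (2 * x) * Gamma (2 * y) * √π ^ 2 * (2 ^ (1 - 2 * x) * 2 ^ (1 - 2 * y)) by ring, p]
  generalize (2 : ℝ) ^ (1 - (2 * x + (2 * y + 1))) = A at *
  generalize Gamma (2 * x + (2 * y + 1)) = B at *
  field_simp
  ring

/-- Selberg's integral for `n = 2`, `z = 1/2`: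
`∫∫ t₁^{x-1} t₂^{x-1} (1-t₁)^{y-1} (1-t₂)^{y-1} |t₁-t₂| dt₁ dt₂
 = Γ(x)Γ(y)Γ(x+1/2)Γ(y+1/2)/(Γ(x+y+1/2)Γ(x+y+1)Γ(3/2))`. -/
theorem selberg_n_two_z_half (x y : ℝ) (hx : 0 < x) (hy : 0 < y) :
    (∫ t₁ in (0 : ℝ)..1, ∫ t₂ in (0 : ℝ)..1,
        t₁ ^ (x - 1) * t₂ ^ (x - 1) * (1 - t₁) ^ (y - 1) * (1 - t₂) ^ (y - 1) *
          |t₁ - t₂|)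
      = Gamma x * Gamma y * Gamma (x + 1 / 2) * Gamma (y + 1 / 2) /
          (Gamma (x + y + 1 / 2) * Gamma (x + y + 1) * Gamma (3 / 2)) := by
  rw [← sel_gamma x y hx hy, two_mul]
  have hU := sel_U x y hx hy
  have hU2 := hU
  rw [MeasureTheory.Measure.volume_eq_prod, ← MeasureTheory.setIntegral_prod_swap] at hU2
  conv_rhs =>
    congr
    · rw [← hU]
    · rw [← hU2]
  have i1 := sel_int x y hx hy (fun z => max (z.1 - z.2) 0) (by fun_prop) (by
    rintro ⟨t, s⟩ ⟨⟨h1, h2⟩, ⟨h3, h4⟩⟩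
    simp only at h1 h2 h3 h4 ⊢
    rw [abs_of_nonneg (le_max_right _ _)]
    exact max_le (by linarith) zero_le_one)
  have i2 := i1.swap
  have i3 := sel_int x y hx hy (fun z => |z.1 - z.2|) (by fun_prop) (by
    rintro ⟨t, s⟩ ⟨⟨h1, h2⟩, ⟨h3, h4⟩⟩
    simp only at h1 h2 h3 h4 ⊢
    rw [abs_abs, abs_le]
    constructor <;> linarith)
  rw [← MeasureTheory.Measure.volume_eq_prod] at i2 ⊢
  simp only [Function.comp_def] at i2
  rw [← MeasureTheory.integral_add i1 i2]
  have e : ∀ z : ℝ × ℝ, ((z.1 ^ (x - 1) * (1 - z.1) ^ (y - 1)) *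
      (z.2 ^ (x - 1) * (1 - z.2) ^ (y - 1))) * max (z.1 - z.2) 0 +
      ((z.swap.1 ^ (x - 1) * (1 - z.swap.1) ^ (y - 1)) *
      (z.swap.2 ^ (x - 1) * (1 - z.swap.2) ^ (y - 1))) * max (z.swap.1 - z.swap.2) 0
      = ((z.1 ^ (x - 1) * (1 - z.1) ^ (y - 1)) *
      (z.2 ^ (x - 1) * (1 - z.2) ^ (y - 1))) * |z.1 - z.2| := by
    rintro ⟨t, s⟩
    simp only [Prod.swap]
    rcases le_total t s with h | h
    · rw [max_eq_right (by linarith), max_eq_left (by linarith), abs_of_nonpos (by linarith)]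
      ring
    · rw [max_eq_left (by linarith), max_eq_right (by linarith), abs_of_nonneg (by linarith)]
      ring
  simp_rw [e]
  rw [MeasureTheory.Measure.volume_eq_prod, MeasureTheory.setIntegral_prod _ i3]
  simp only [intervalIntegral.integral_of_le zero_le_one, MeasureTheory.integral_Ioc_eq_integral_Ioo]
  congr 1
  ext t
  congr 1
  ext s
  ring
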